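/- Let T : ℝ^d → ℝ^d be γ-contractive with respect to a norm ‖·‖_c with fixed point θ*, g∘F decomposable at θ* (with maps g : ℝ^m → ℝ^d and F), let (w_t) be i.i.d. zero-mean with E‖w₀‖⁴ < ∞, and let ν be the probability measure with finite second moment such that W₂(ν_α, ν) → 0 as α → 0⁺, where ν_α is the pushforward of the stationary distribution μ_α under x ↦ (x − θ*)/√α. Then: (1) if g is differentiable on a neighborhood of 0 with derivative continuous at 0, or if the derivative ∇F(0) is the zero map, then ∫y dν(y) = 0; (2) if the covariance matrix Var(w₀) is positive definite and there exists an index i ∈ {1,…,d} such that either the set { z ∈ ℝ^d : g_i(∇F(0)x) ≥ ⟨z, x⟩ for all x ∈ ℝ^d } or the set { z ∈ ℝ^d : g_i(∇F(0)x) ≤ ⟨z, x⟩ for all x ∈ ℝ^d } contains two distinct elements, then ∫y dν(y) ≠ 0. -/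

import Mathlib

open MeasureTheory ProbabilityTheory Filter Topology

noncomputable section

/-- A function on `ℝ^d` satisfying the axioms of a norm. -/
structure IsNormLike {V : Type*} [AddCommGroup V] [Module ℝ V] (c : V → ℝ) : Prop where
  add_le : ∀ x y, c (x + y) ≤ c x + c y
  smul_eq : ∀ (r : ℝ) (x : V), c (r • x) = |r| * c x
  pos : ∀ x, x ≠ 0 → 0 < c x

/-- `π` is a coupling of `μ` and `ν`. -/
def IsCoupling {X : Type*} [MeasurableSpace X] (π : Measure (X × X)) (μ ν : Measure X) : Prop :=
  π.map Prod.fst = μ ∧ π.map Prod.snd = ν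

/-- Squared Wasserstein-2 distance with respect to the norm-like function `c`. -/
def W2sq {X : Type*} [MeasurableSpace X] [AddGroup X] (c : X → ℝ) (μ ν : Measure X) : ℝ :=
  sInf { r : ℝ | ∃ π : Measure (X × X), IsCoupling π μ ν ∧
    Integrable (fun p => (c (p.1 - p.2)) ^ 2) π ∧ r = ∫ p, (c (p.1 - p.2)) ^ 2 ∂π }

/-- Wasserstein-2 distance with respect to the norm-like function `c`. -/
def W2dist {X : Type*} [MeasurableSpace X] [AddGroup X] (c : X → ℝ) (μ ν : Measure X) : ℝ :=
  Real.sqrt (W2sq c μ ν)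

/-- One step of the SA Markov kernel with stepsize `α` and noise distribution `νw`,
at the level of laws. -/
def saStep {d : ℕ} (T : EuclideanSpace ℝ (Fin d) → EuclideanSpace ℝ (Fin d)) (α : ℝ)
    (νw : Measure (EuclideanSpace ℝ (Fin d))) (μ : Measure (EuclideanSpace ℝ (Fin d))) :
    Measure (EuclideanSpace ℝ (Fin d)) :=
  Measure.map (fun p => p.1 + α • (T p.1 - p.1 + p.2)) (μ.prod νw)

/-! Rescale the chain around the fixed point by `y = s⁻¹ • (θ - θ⋆)`, where `α = s ^ 2`. Its
stationary law `ρ s` is then invariant under `y ↦ y + s ^ 2 • (T_s y - y) + s • w`, where `T_s` is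
the difference quotient of `T` at scale `s` and converges to the directional derivative
`ψ = g ∘ ∇F(0)` as `s → 0`.

Taking expectations of the invariance gives `∫ (T_s y - y) ∂ρ s = 0`, and in the limit
`∫ ψ ∂ν = ∫ y ∂ν`. If `ψ` is linear, the mean of `ν` is therefore a fixed point of `ψ`, which
inherits the contraction property of `T`, and so it vanishes.

Taking second moments along a linear functional `ℓ` instead bounds `∫ ℓ w ^ 2 ∂νw` by a quantity
that tends to `0` when `ℓ` vanishes `ν`-almost everywhere; so nondegenerate noise keeps `ν` from
living on a hyperplane. But if `ν` has mean zero, then `ψ i` and the linear functionals below it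
all have integral zero, hence agree almost everywhere, and two distinct ones would confine `ν` to
the hyperplane where they coincide. -/

open scoped ENNReal NNReal

section NormLike

namespace IsNormLike

section Algebra

variable {V : Type*} [AddCommGroup V] [Module ℝ V] {c : V → ℝ}

/-- A norm-like function, bundled as a seminorm to give access to the library on seminorms. -/
def toSeminorm (hc : IsNormLike c) : Seminorm ℝ V :=
  Seminorm.of c hc.add_le hc.smul_eq

theorem map_zero (hc : IsNormLike c) : c 0 = 0 :=
  _root_.map_zero hc.toSeminorm

theorem nonneg (hc : IsNormLike c) (x : V) : 0 ≤ c x :=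
  apply_nonneg hc.toSeminorm x

end Algebra

variable {V : Type*} [NormedAddCommGroup V] [NormedSpace ℝ V] [FiniteDimensional ℝ V] {c : V → ℝ}

theorem continuous (hc : IsNormLike c) : Continuous c :=
  hc.toSeminorm.convexOn.locallyLipschitz.continuous

theorem exists_le_mul_norm (hc : IsNormLike c) : ∃ b > 0, ∀ x, c x ≤ b * ‖x‖ :=
  hc.toSeminorm.bound_of_continuous_normedSpace hc.continuous

theorem exists_norm_le_mul (hc : IsNormLike c) : ∃ a > 0, ∀ x, ‖x‖ ≤ a * c x := by
  obtain ⟨r, hr, hmin⟩ := (isCompact_sphere (0 : V) 1).exists_forall_le'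
    hc.continuous.continuousOn fun u hu => hc.pos u (ne_zero_of_mem_unit_sphere ⟨u, hu⟩)
  refine ⟨r⁻¹, inv_pos.2 hr, fun x => ?_⟩
  rcases eq_or_ne x 0 with rfl | hx
  · simp [hc.map_zero]
  have hnorm : 0 < ‖x‖ := norm_pos_iff.2 hx
  have hunit : r ≤ ‖x‖⁻¹ * c x := by
    simpa [hc.smul_eq] using hmin (‖x‖⁻¹ • x) (by simp [norm_smul, hx])
  rw [inv_mul_eq_div, le_div_iff₀ hnorm] at hunit
  rwa [inv_mul_eq_div, le_div_iff₀' hr]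

theorem exists_lipschitzWith {W : Type*} [NormedAddCommGroup W] [NormedSpace ℝ W]
    [FiniteDimensional ℝ W] {c' : W → ℝ} (hc : IsNormLike c) (hc' : IsNormLike c') {γ : ℝ}
    {T : V → W} (hT : ∀ x y, c' (T x - T y) ≤ γ * c (x - y)) : ∃ L, LipschitzWith L T := by
  obtain ⟨a, ha, hca⟩ := hc'.exists_norm_le_mul
  obtain ⟨b, -, hcb⟩ := hc.exists_le_mul_norm
  refine ⟨_, LipschitzWith.of_dist_le' (K := a * (|γ| * b)) fun x y => ?_⟩
  simp only [dist_eq_norm]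
  calc ‖T x - T y‖ ≤ a * c' (T x - T y) := hca _
    _ ≤ a * (γ * c (x - y)) := by gcongr; exact hT x y
    _ ≤ a * (|γ| * (b * ‖x - y‖)) := by
        gcongr
        exacts [hc.nonneg _, le_abs_self γ, hcb _]
    _ = a * (|γ| * b) * ‖x - y‖ := by ring

end IsNormLike

end NormLike

section Coupling

namespace IsCoupling

variable {X : Type*} [MeasurableSpace X] {π : Measure (X × X)} {μ ν : Measure X}

theorem measurePreserving_fst (h : IsCoupling π μ ν) : MeasurePreserving Prod.fst π μ :=
  ⟨measurable_fst, h.1⟩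

theorem measurePreserving_snd (h : IsCoupling π μ ν) : MeasurePreserving Prod.snd π ν :=
  ⟨measurable_snd, h.2⟩

theorem isProbabilityMeasure [IsProbabilityMeasure ν] (h : IsCoupling π μ ν) :
    IsProbabilityMeasure π :=
  have : IsProbabilityMeasure (π.map Prod.snd) := by rwa [h.2]
  Measure.isProbabilityMeasure_of_map Prod.snd

theorem isProbabilityMeasure_left [IsProbabilityMeasure ν] (h : IsCoupling π μ ν) :
    IsProbabilityMeasure μ :=
  have := h.isProbabilityMeasure
  h.1 ▸ Measure.isProbabilityMeasure_map measurable_fst.aemeasurable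

theorem prod (μ ν : Measure X) [IsProbabilityMeasure μ] [IsProbabilityMeasure ν] :
    IsCoupling (μ.prod ν) μ ν := by
  simp [IsCoupling]

variable {E G : Type*} [NormedAddCommGroup E] [MeasurableSpace E] [NormedAddCommGroup G]
  {π : Measure (E × E)} {μ ν : Measure E} {p : ℝ≥0∞} {K : ℝ≥0} {f : E → G}

theorem eLpNorm_comp_fst_sub_comp_snd_le (hf : LipschitzWith K f) (π : Measure (E × E))
    (p : ℝ≥0∞) :
    eLpNorm (fun q => f q.1 - f q.2) p π ≤ K * eLpNorm (fun q => q.1 - q.2) p π := by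
  refine eLpNorm_le_nnreal_smul_eLpNorm_of_ae_le_mul (ae_of_all _ fun q => ?_) p
  exact hf.norm_sub_le q.1 q.2

variable [BorelSpace E] [SecondCountableTopology E]

theorem memLp_left (h : IsCoupling π μ ν) (hν : MemLp id p ν)
    (hcost : MemLp (fun q => q.1 - q.2) p π) : MemLp id p μ := by
  have hfst : MemLp (id ∘ Prod.fst) p π := by
    convert hcost.add (hν.comp_measurePreserving h.measurePreserving_snd) using 1
    ext q
    simp
  rwa [← h.1, memLp_map_measure_iff measurable_id.aestronglyMeasurable
    measurable_fst.aemeasurable]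

theorem eLpNorm_le_add (h : IsCoupling π μ ν) (hp : 1 ≤ p) (hf : LipschitzWith K f) :
    eLpNorm f p μ ≤ eLpNorm f p ν + K * eLpNorm (fun q => q.1 - q.2) p π ∧
      eLpNorm f p ν ≤ eLpNorm f p μ + K * eLpNorm (fun q => q.1 - q.2) p π := by
  have hfst := hf.continuous.aestronglyMeasurable (μ := μ)
  have hsnd := hf.continuous.aestronglyMeasurable (μ := ν)
  have hfst' := hfst.comp_measurePreserving h.measurePreserving_fst
  have hsnd' := hsnd.comp_measurePreserving h.measurePreserving_snd
  have hdiff := eLpNorm_comp_fst_sub_comp_snd_le hf π p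
  rw [← eLpNorm_comp_measurePreserving hfst h.measurePreserving_fst,
    ← eLpNorm_comp_measurePreserving hsnd h.measurePreserving_snd]
  constructor
  · calc eLpNorm (f ∘ Prod.fst) p π
        = eLpNorm (f ∘ Prod.snd + (f ∘ Prod.fst - f ∘ Prod.snd)) p π := by
          rw [add_sub_cancel]
      _ ≤ _ := (eLpNorm_add_le hsnd' (hfst'.sub hsnd') hp).trans (add_le_add_right hdiff _)
  · calc eLpNorm (f ∘ Prod.snd) p π
        = eLpNorm (f ∘ Prod.fst - (f ∘ Prod.fst - f ∘ Prod.snd)) p π := by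
          rw [sub_sub_cancel]
      _ ≤ _ := (eLpNorm_sub_le hfst' (hfst'.sub hsnd') hp).trans (add_le_add_right hdiff _)

theorem enorm_integral_sub_integral_le [NormedSpace ℝ G] (h : IsCoupling π μ ν)
    (hμ : Integrable f μ) (hν : Integrable f ν) (hf : LipschitzWith K f) :
    ‖∫ x, f x ∂μ - ∫ x, f x ∂ν‖ₑ ≤ K * eLpNorm (fun q => q.1 - q.2) 1 π := by
  have hfst : ∫ q, f q.1 ∂π = ∫ x, f x ∂μ := by
    rw [← h.1, integral_map measurable_fst.aemeasurable hf.continuous.aestronglyMeasurable]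
  have hsnd : ∫ q, f q.2 ∂π = ∫ x, f x ∂ν := by
    rw [← h.2, integral_map measurable_snd.aemeasurable hf.continuous.aestronglyMeasurable]
  calc ‖∫ x, f x ∂μ - ∫ x, f x ∂ν‖ₑ
      = ‖∫ q, (f q.1 - f q.2) ∂π‖ₑ := by
        rw [← hfst, ← hsnd, ← integral_sub]
        exacts [h.measurePreserving_fst.integrable_comp_of_integrable hμ,
          h.measurePreserving_snd.integrable_comp_of_integrable hν]
    _ ≤ eLpNorm (fun q => f q.1 - f q.2) 1 π := by
        rw [eLpNorm_one_eq_lintegral_enorm]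
        exact enorm_integral_le_lintegral_enorm _
    _ ≤ K * eLpNorm (fun q => q.1 - q.2) 1 π := eLpNorm_comp_fst_sub_comp_snd_le hf π 1

end IsCoupling

end Coupling

section Wasserstein

variable {ι E : Type*} [NormedAddCommGroup E] [MeasurableSpace E] {p : ℝ≥0∞}
  {ρ : ι → Measure E} {l : Filter ι} {ν : Measure E}

/-- Convergence of the laws `ρ i` to `ν` in the Wasserstein-`p` distance of the norm of `E`. It is
phrased through couplings of arbitrarily small cost, so that no infimum has to be attained or shown
to be finite. -/
def TendstoWasserstein (p : ℝ≥0∞) (ρ : ι → Measure E) (l : Filter ι) (ν : Measure E) : Prop :=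
  ∀ η : ℝ≥0∞, 0 < η → ∀ᶠ i in l, ∃ π : Measure (E × E), IsCoupling π (ρ i) ν ∧
    eLpNorm (fun q => q.1 - q.2) p π ≤ η

namespace TendstoWasserstein

theorem eventually_isProbabilityMeasure [IsProbabilityMeasure ν] (h : TendstoWasserstein p ρ l ν) :
    ∀ᶠ i in l, IsProbabilityMeasure (ρ i) := by
  filter_upwards [h 1 one_pos] with i ⟨π, hπ, _⟩ using hπ.isProbabilityMeasure_left

theorem eventually_mul_eLpNorm_le (h : TendstoWasserstein p ρ l ν) (K : ℝ≥0) {δ : ℝ≥0∞}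
    (hδ : δ ≠ 0) : ∀ᶠ i in l, ∃ π : Measure (E × E), IsCoupling π (ρ i) ν ∧
      K * eLpNorm (fun q => q.1 - q.2) p π ≤ δ := by
  obtain ⟨η, hη, hηδ⟩ := ENNReal.exists_nnreal_pos_mul_lt (ENNReal.coe_ne_top (r := K)) hδ
  filter_upwards [h η (ENNReal.coe_pos.2 hη)] with i ⟨π, hπ, hcost⟩
  refine ⟨π, hπ, (mul_le_mul_right hcost _).trans ?_⟩
  rw [mul_comm]
  exact hηδ.le

variable [BorelSpace E] [SecondCountableTopology E]

theorem eventually_memLp (h : TendstoWasserstein p ρ l ν) (hν : MemLp id p ν) :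
    ∀ᶠ i in l, MemLp id p (ρ i) := by
  filter_upwards [h 1 one_pos] with i ⟨π, hπ, hcost⟩
  exact hπ.memLp_left hν
    ⟨(measurable_fst.sub measurable_snd).aestronglyMeasurable, hcost.trans_lt ENNReal.one_lt_top⟩

theorem mono {q : ℝ≥0∞} [IsProbabilityMeasure ν] (hpq : p ≤ q) (h : TendstoWasserstein q ρ l ν) :
    TendstoWasserstein p ρ l ν := by
  intro η hη
  filter_upwards [h η hη] with i ⟨π, hπ, hcost⟩
  have := hπ.isProbabilityMeasure
  exact ⟨π, hπ, (eLpNorm_le_eLpNorm_of_exponent_le hpq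
    (measurable_fst.sub measurable_snd).aestronglyMeasurable).trans hcost⟩

variable {G : Type*} [NormedAddCommGroup G] {K : ℝ≥0}

theorem tendsto_eLpNorm {f : E → G} (h : TendstoWasserstein p ρ l ν) (hp : 1 ≤ p)
    (hf : LipschitzWith K f) (hν : MemLp f p ν) :
    Tendsto (fun i => eLpNorm f p (ρ i)) l (𝓝 (eLpNorm f p ν)) := by
  refine (ENNReal.tendsto_nhds hν.2.ne).2 fun δ hδ => ?_
  filter_upwards [h.eventually_mul_eLpNorm_le K hδ.ne'] with i ⟨π, hπ, hcost⟩
  obtain ⟨hle, hge⟩ := hπ.eLpNorm_le_add hp hf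
  exact ⟨tsub_le_iff_right.2 (hge.trans (by gcongr)), hle.trans (by gcongr)⟩

theorem tendsto_integral [NormedSpace ℝ G] [l.IsCountablyGenerated] {f : ι → E → G}
    {ψ : E → G} (h : TendstoWasserstein 1 ρ l ν) (hν : Integrable id ν)
    (hf : ∀ i, LipschitzWith K (f i)) (hf0 : ∀ i, f i 0 = 0)
    (hlim : ∀ y, Tendsto (fun i => f i y) l (𝓝 (ψ y))) :
    Tendsto (fun i => ∫ y, f i y ∂ρ i) l (𝓝 (∫ y, ψ y ∂ν)) := by
  have hint {σ : Measure E} (hσ : MemLp id 1 σ) (i : ι) : Integrable (f i) σ :=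
    memLp_one_iff_integrable.1 ((hf i).comp_memLp (hf0 i) hσ)
  have hν' : MemLp id 1 ν := memLp_one_iff_integrable.2 hν
  have hdom : Tendsto (fun i => ∫ y, f i y ∂ν) l (𝓝 (∫ y, ψ y ∂ν)) :=
    tendsto_integral_filter_of_dominated_convergence (fun y => K * ‖y‖)
      (.of_forall fun i => (hf i).continuous.aestronglyMeasurable)
      (.of_forall fun i => ae_of_all _ fun y => by simpa [hf0 i] using (hf i).norm_sub_le y 0)
      (hν.norm.const_mul _) (ae_of_all _ hlim)
  have hdiff : Tendsto (fun i => ∫ y, f i y ∂ρ i - ∫ y, f i y ∂ν) l (𝓝 0) := by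
    rw [tendsto_zero_iff_enorm_tendsto_zero, ENNReal.tendsto_nhds_zero]
    intro δ hδ
    filter_upwards [h.eventually_mul_eLpNorm_le K hδ.ne', h.eventually_memLp hν'] with
      i ⟨π, hπ, hcost⟩ hρ
    exact (hπ.enorm_integral_sub_integral_le (hint hρ i) (hint hν' i) (hf i)).trans hcost
  simpa using hdiff.add hdom

end TendstoWasserstein

end Wasserstein

section W2dist

theorem ofReal_integral_sq_eq_eLpNorm_sq {X : Type*} [MeasurableSpace X] {π : Measure X} {f : X → ℝ}
    (hf : MemLp f 2 π) : ENNReal.ofReal (∫ x, f x ^ 2 ∂π) = eLpNorm f 2 π ^ 2 := by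
  rw [ofReal_integral_eq_lintegral_ofReal hf.integrable_sq (ae_of_all _ fun x => sq_nonneg _)]
  have h := eLpNorm_nnreal_pow_eq_lintegral (f := f) (μ := π) (two_ne_zero (α := ℝ≥0))
  norm_num at h
  rw [h]
  congr 1 with x
  rw [← enorm_pow, Real.enorm_of_nonneg (sq_nonneg _)]

variable {V : Type*} [NormedAddCommGroup V] [NormedSpace ℝ V] [FiniteDimensional ℝ V]
  {c : V → ℝ}

theorem IsNormLike.memLp_comp {X : Type*} [MeasurableSpace X] {π : Measure X} {p : ℝ≥0∞}
    {f : X → V} (hc : IsNormLike c) (hf : MemLp f p π) : MemLp (fun x => c (f x)) p π := by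
  obtain ⟨b, -, hcb⟩ := hc.exists_le_mul_norm
  refine hf.of_le_mul (c := b) (hc.continuous.comp_aestronglyMeasurable hf.1)
    (ae_of_all _ fun x => ?_)
  rw [Real.norm_of_nonneg (hc.nonneg _)]
  exact hcb _

variable [MeasurableSpace V] [BorelSpace V]

theorem IsNormLike.exists_coupling_of_W2dist_lt (hc : IsNormLike c) {μ ν : Measure V}
    [IsProbabilityMeasure μ] [IsProbabilityMeasure ν] (hμ : MemLp id 2 μ) (hν : MemLp id 2 ν)
    {r : ℝ} (hr : W2dist c μ ν < r) : ∃ π : Measure (V × V), IsCoupling π μ ν ∧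
      eLpNorm (fun q => c (q.1 - q.2)) 2 π ≤ ENNReal.ofReal r := by
  have hr0 : 0 < r := (Real.sqrt_nonneg _).trans_lt hr
  have hprod : MemLp (fun q : V × V => c (q.1 - q.2)) 2 (μ.prod ν) :=
    hc.memLp_comp ((hμ.comp_fst ν).sub (hν.comp_snd μ))
  have hsq : W2sq c μ ν < r ^ 2 := (Real.sqrt_lt' hr0).1 hr
  obtain ⟨_, ⟨π, hπ, hint, rfl⟩, hlt⟩ := exists_lt_of_csInf_lt
    (by exact ⟨_, μ.prod ν, IsCoupling.prod μ ν, hprod.integrable_sq, rfl⟩) hsq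
  have hmem : MemLp (fun q : V × V => c (q.1 - q.2)) 2 π :=
    (memLp_two_iff_integrable_sq
      (hc.continuous.comp (continuous_fst.sub continuous_snd)).aestronglyMeasurable).2 hint
  refine ⟨π, hπ, (ENNReal.pow_le_pow_left_iff two_ne_zero).1 ?_⟩
  rw [← ofReal_integral_sq_eq_eLpNorm_sq hmem, ← ENNReal.ofReal_pow hr0.le]
  exact ENNReal.ofReal_le_ofReal hlt.le

theorem IsNormLike.tendstoWasserstein (hc : IsNormLike c) {ι : Type*} {l : Filter ι}
    {ρ : ι → Measure V} {ν : Measure V} [IsProbabilityMeasure ν]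
    (hρ : ∀ᶠ i in l, IsProbabilityMeasure (ρ i) ∧ MemLp id 2 (ρ i)) (hν : MemLp id 2 ν)
    (h : Tendsto (fun i => W2dist c (ρ i) ν) l (𝓝 0)) : TendstoWasserstein 2 ρ l ν := by
  intro η hη
  obtain ⟨a, -, hca⟩ := hc.exists_norm_le_mul
  obtain ⟨r, hr, hrη⟩ := ENNReal.exists_nnreal_pos_mul_lt (ENNReal.ofReal_ne_top (r := a)) hη.ne'
  filter_upwards [hρ, h.eventually_lt_const (NNReal.coe_pos.2 hr)] with i ⟨_, hρ2⟩ hlt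
  obtain ⟨π, hπ, hcost⟩ := hc.exists_coupling_of_W2dist_lt hρ2 hν hlt
  refine ⟨π, hπ, ?_⟩
  calc eLpNorm (fun q => q.1 - q.2) 2 π
      ≤ ENNReal.ofReal a * eLpNorm (fun q => c (q.1 - q.2)) 2 π :=
        eLpNorm_le_mul_eLpNorm_of_ae_le_mul (ae_of_all _ fun q =>
          (hca _).trans_eq (by rw [Real.norm_of_nonneg (hc.nonneg _)])) 2
    _ ≤ ENNReal.ofReal a * r := by gcongr; simpa using hcost
    _ ≤ η := by rw [mul_comm]; exact hrη.le

end W2dist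

section Stationary

theorem enorm_integral_mul_le_eLpNorm_mul_eLpNorm {X : Type*} [MeasurableSpace X] {π : Measure X}
    {u v : X → ℝ} (hu : AEStronglyMeasurable u π) (hv : AEStronglyMeasurable v π) :
    ‖∫ x, u x * v x ∂π‖ₑ ≤ eLpNorm u 2 π * eLpNorm v 2 π :=
  calc ‖∫ x, u x * v x ∂π‖ₑ ≤ ∫⁻ x, ‖u x * v x‖ₑ ∂π := enorm_integral_le_lintegral_enorm _
    _ = eLpNorm (u • v) 1 π := eLpNorm_one_eq_lintegral_enorm.symm
    _ ≤ eLpNorm u 2 π * eLpNorm v 2 π := eLpNorm_smul_le_mul_eLpNorm hv hu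

theorem integral_add_sq_prod_of_integral_eq_zero {X Y : Type*} [MeasurableSpace X]
    [MeasurableSpace Y] {ρ : Measure X} {σ : Measure Y} [IsProbabilityMeasure ρ]
    [IsProbabilityMeasure σ] {u : X → ℝ} {v : Y → ℝ} (hu : MemLp u 2 ρ) (hv : MemLp v 2 σ)
    (hv0 : ∫ y, v y ∂σ = 0) :
    ∫ p, (u p.1 + v p.2) ^ 2 ∂ρ.prod σ = ∫ x, u x ^ 2 ∂ρ + ∫ y, v y ^ 2 ∂σ := by
  have hu2 : Integrable (fun p : X × Y => u p.1 ^ 2) (ρ.prod σ) := hu.integrable_sq.comp_fst σ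
  have hv2 : Integrable (fun p : X × Y => v p.2 ^ 2) (ρ.prod σ) := hv.integrable_sq.comp_snd ρ
  have huv : Integrable (fun p : X × Y => 2 * (u p.1 * v p.2)) (ρ.prod σ) :=
    ((hu.integrable one_le_two).mul_prod (hv.integrable one_le_two)).const_mul 2
  calc ∫ p, (u p.1 + v p.2) ^ 2 ∂ρ.prod σ
      = ∫ p, (u p.1 ^ 2 + 2 * (u p.1 * v p.2) + v p.2 ^ 2) ∂ρ.prod σ := by
        congr with p
        ring
    _ = ∫ p, u p.1 ^ 2 ∂ρ.prod σ + ∫ p, v p.2 ^ 2 ∂ρ.prod σ := by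
        have hcross : ∫ p, 2 * (u p.1 * v p.2) ∂ρ.prod σ = 0 := by
          rw [integral_const_mul, integral_prod_mul, hv0, mul_zero, mul_zero]
        rw [integral_add _ hv2, integral_add hu2 huv, hcross, add_zero]
        exact hu2.add huv
    _ = ∫ x, u x ^ 2 ∂ρ + ∫ y, v y ^ 2 ∂σ := by
        rw [integral_fun_fst (fun x => u x ^ 2), integral_fun_snd (fun y => v y ^ 2)]
        simp

variable {E : Type*} [NormedAddCommGroup E] [NormedSpace ℝ E] [MeasurableSpace E]

/-- `ρ` is stationary for the Markov chain `y ↦ f y + s • w` driven by independent noise `w` of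
law `νw`. -/
def IsStationaryLaw (f : E → E) (s : ℝ) (νw ρ : Measure E) : Prop :=
  (ρ.prod νw).map (fun p => f p.1 + s • p.2) = ρ

namespace IsStationaryLaw

variable [BorelSpace E] [SecondCountableTopology E] {f h : E → E} {s : ℝ} {νw ρ : Measure E}

theorem integral_comp {G : Type*} [NormedAddCommGroup G] [NormedSpace ℝ G]
    (hρ : IsStationaryLaw f s νw ρ) (hf : AEStronglyMeasurable f ρ) {φ : E → G}
    (hφ : Continuous φ) : ∫ p, φ (f p.1 + s • p.2) ∂ρ.prod νw = ∫ y, φ y ∂ρ := by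
  have hmeas : AEMeasurable (fun p : E × E => f p.1 + s • p.2) (ρ.prod νw) :=
    hf.comp_fst.aemeasurable.add (measurable_snd.const_smul s).aemeasurable
  conv_rhs => rw [← hρ, integral_map hmeas hφ.aestronglyMeasurable]

variable [IsProbabilityMeasure νw] [IsProbabilityMeasure ρ]

theorem integral_map_eq (hρ : IsStationaryLaw f s νw ρ) (hf : Integrable f ρ)
    (hw : Integrable (fun w => w) νw) (hw0 : ∫ w, w ∂νw = 0) : ∫ y, f y ∂ρ = ∫ y, y ∂ρ := by
  have hw' : Integrable (fun p : E × E => s • p.2) (ρ.prod νw) := (hw.comp_snd ρ).smul s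
  calc ∫ y, f y ∂ρ = ∫ p, (f p.1 + s • p.2) ∂ρ.prod νw := by
        rw [integral_add (hf.comp_fst νw) hw', integral_smul, integral_fun_fst f,
          integral_fun_snd fun w => w, hw0]
        simp
    _ = ∫ y, y ∂ρ := hρ.integral_comp hf.1 continuous_id

theorem integral_drift_eq_zero
    (hρ : IsStationaryLaw (fun y => y + s ^ 2 • h y) s νw ρ) (hs : s ≠ 0)
    (hy : Integrable (fun y => y) ρ) (hh : Integrable h ρ) (hw : Integrable (fun w => w) νw)
    (hw0 : ∫ w, w ∂νw = 0) : ∫ y, h y ∂ρ = 0 := by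
  have hbal := hρ.integral_map_eq (hy.add (hh.smul (s ^ 2))) hw hw0
  have hsum : ∫ y, (y + s ^ 2 • h y) ∂ρ = ∫ y, y ∂ρ + s ^ 2 • ∫ y, h y ∂ρ := by
    rw [← integral_smul]
    exact integral_add hy (hh.smul _)
  simpa [hs] using hsum.symm.trans hbal

variable [CompleteSpace E]

theorem integral_dual_sq_eq (hρ : IsStationaryLaw f s νw ρ) (hf : MemLp f 2 ρ)
    (hw : MemLp id 2 νw) (hw0 : ∫ w, w ∂νw = 0) (ℓ : StrongDual ℝ E) :
    ∫ y, ℓ y ^ 2 ∂ρ = ∫ y, ℓ (f y) ^ 2 ∂ρ + s ^ 2 * ∫ w, ℓ w ^ 2 ∂νw := by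
  have hℓw : MemLp (fun w => s * ℓ w) 2 νw := (ℓ.comp_memLp' hw).const_mul s
  have hℓw0 : ∫ w, s * ℓ w ∂νw = 0 := by
    have hcomm : ∫ w, ℓ w ∂νw = ℓ (∫ w, w ∂νw) := ℓ.integral_comp_comm (hw.integrable one_le_two)
    rw [integral_const_mul, hcomm, hw0, map_zero, mul_zero]
  calc ∫ y, ℓ y ^ 2 ∂ρ = ∫ p, ℓ (f p.1 + s • p.2) ^ 2 ∂ρ.prod νw :=
        (hρ.integral_comp hf.1 (ℓ.continuous.pow 2)).symm
    _ = ∫ p, (ℓ (f p.1) + s * ℓ p.2) ^ 2 ∂ρ.prod νw := by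
        simp only [map_add, map_smul, smul_eq_mul]
    _ = ∫ y, ℓ (f y) ^ 2 ∂ρ + ∫ w, (s * ℓ w) ^ 2 ∂νw :=
        integral_add_sq_prod_of_integral_eq_zero (ℓ.comp_memLp' hf) hℓw hℓw0
    _ = ∫ y, ℓ (f y) ^ 2 ∂ρ + s ^ 2 * ∫ w, ℓ w ^ 2 ∂νw := by
        simp only [mul_pow, integral_const_mul]

theorem ofReal_integral_dual_sq_noise_le
    (hρ : IsStationaryLaw (fun y => y + s ^ 2 • h y) s νw ρ) (hs : s ≠ 0) (hy : MemLp id 2 ρ)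
    (hh : MemLp h 2 ρ) (hw : MemLp id 2 νw) (hw0 : ∫ w, w ∂νw = 0) (ℓ : StrongDual ℝ E) :
    ENNReal.ofReal (∫ w, ℓ w ^ 2 ∂νw) ≤ 2 * (eLpNorm ℓ 2 ρ * eLpNorm (ℓ ∘ h) 2 ρ) := by
  have hℓy : MemLp ℓ 2 ρ := ℓ.comp_memLp' hy
  have hℓh : MemLp (ℓ ∘ h) 2 ρ := ℓ.comp_memLp' hh
  have hmul : Integrable (fun y => ℓ y * ℓ (h y)) ρ := hℓy.integrable_mul hℓh
  have hs2 : 0 < s ^ 2 := by positivity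
  have hbal := hρ.integral_dual_sq_eq (hy.add (hh.const_smul (s ^ 2))) hw hw0 ℓ
  -- The term `s ^ 4 * ∫ ℓ (h y) ^ 2` of the expanded square is dropped.
  have hexpand : ∫ y, ℓ y ^ 2 ∂ρ + 2 * s ^ 2 * ∫ y, ℓ y * ℓ (h y) ∂ρ
      ≤ ∫ y, ℓ (y + s ^ 2 • h y) ^ 2 ∂ρ := by
    rw [← integral_const_mul, ← integral_add hℓy.integrable_sq (hmul.const_mul _)]
    refine integral_mono (hℓy.integrable_sq.add (hmul.const_mul _))
      (ℓ.comp_memLp' (hy.add (hh.const_smul (s ^ 2)))).integrable_sq fun y => ?_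
    simp only [map_add, map_smul, smul_eq_mul]
    nlinarith [sq_nonneg (s ^ 2 * ℓ (h y))]
  have hle : ∫ w, ℓ w ^ 2 ∂νw ≤ 2 * |∫ y, ℓ y * ℓ (h y) ∂ρ| := by
    refine le_of_mul_le_mul_left ?_ hs2
    nlinarith [neg_abs_le (∫ y, ℓ y * ℓ (h y) ∂ρ)]
  calc ENNReal.ofReal (∫ w, ℓ w ^ 2 ∂νw)
      ≤ ENNReal.ofReal (2 * |∫ y, ℓ y * ℓ (h y) ∂ρ|) := ENNReal.ofReal_le_ofReal hle
    _ = 2 * ‖∫ y, ℓ y * ℓ (h y) ∂ρ‖ₑ := by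
        rw [ENNReal.ofReal_mul zero_le_two, Real.enorm_eq_ofReal_abs, ENNReal.ofReal_ofNat]
    _ ≤ 2 * (eLpNorm ℓ 2 ρ * eLpNorm (ℓ ∘ h) 2 ρ) := by
        gcongr
        exact enorm_integral_mul_le_eLpNorm_mul_eLpNorm hℓy.1 hℓh.1

end IsStationaryLaw

end Stationary

section Limit

theorem eLpNorm_le_of_lipschitzWith_of_map_zero {E G : Type*} [NormedAddCommGroup E]
    [MeasurableSpace E] [NormedAddCommGroup G] {K : ℝ≥0} {f : E → G} (hf : LipschitzWith K f)
    (hf0 : f 0 = 0) (p : ℝ≥0∞) (ρ : Measure E) : eLpNorm f p ρ ≤ K * eLpNorm id p ρ :=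
  eLpNorm_le_nnreal_smul_eLpNorm_of_ae_le_mul
    (ae_of_all _ fun y => NNReal.coe_le_coe.1 (by simpa [hf0] using hf.norm_sub_le y 0)) p

variable {ι E : Type*} [NormedAddCommGroup E] [NormedSpace ℝ E] [MeasurableSpace E] [BorelSpace E]
  [SecondCountableTopology E] {l : Filter ι} [l.NeBot] {s : ι → ℝ} {h : ι → E → E} {K : ℝ≥0}
  {ρ : ι → Measure E} {ν νw : Measure E} [IsProbabilityMeasure ν] [IsProbabilityMeasure νw]

theorem integral_tendsto_drift_eq_zero [l.IsCountablyGenerated] {ψ : E → E}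
    (hρ : TendstoWasserstein 1 ρ l ν) (hν : Integrable (fun y => y) ν) (hs : ∀ᶠ i in l, s i ≠ 0)
    (hstat : ∀ᶠ i in l, IsStationaryLaw (fun y => y + s i ^ 2 • h i y) (s i) νw (ρ i))
    (hh : ∀ i, LipschitzWith K (h i)) (hh0 : ∀ i, h i 0 = 0)
    (hlim : ∀ y, Tendsto (fun i => h i y) l (𝓝 (ψ y)))
    (hw : Integrable (fun w => w) νw) (hw0 : ∫ w, w ∂νw = 0) : ∫ y, ψ y ∂ν = 0 := by
  refine tendsto_nhds_unique ((hρ.tendsto_integral hν hh hh0 hlim).congr' ?_) tendsto_const_nhds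
  filter_upwards [hs, hstat, hρ.eventually_isProbabilityMeasure,
    hρ.eventually_memLp (memLp_one_iff_integrable.2 hν)] with i hsi hi _ hρi
  exact hi.integral_drift_eq_zero hsi (memLp_one_iff_integrable.1 hρi)
    (memLp_one_iff_integrable.1 ((hh i).comp_memLp (hh0 i) hρi)) hw hw0

theorem integral_dual_sq_noise_eq_zero [CompleteSpace E] (hρ : TendstoWasserstein 2 ρ l ν)
    (hν : MemLp id 2 ν) (hs : ∀ᶠ i in l, s i ≠ 0)
    (hstat : ∀ᶠ i in l, IsStationaryLaw (fun y => y + s i ^ 2 • h i y) (s i) νw (ρ i))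
    (hh : ∀ i, LipschitzWith K (h i)) (hh0 : ∀ i, h i 0 = 0) (hw : MemLp id 2 νw)
    (hw0 : ∫ w, w ∂νw = 0) {ℓ : StrongDual ℝ E} (hℓ : ∀ᵐ y ∂ν, ℓ y = 0) :
    ∫ w, ℓ w ^ 2 ∂νw = 0 := by
  have hle : ∀ᶠ i in l, ENNReal.ofReal (∫ w, ℓ w ^ 2 ∂νw)
      ≤ 2 * (eLpNorm ℓ 2 (ρ i) * (‖ℓ‖₊ * K * eLpNorm id 2 (ρ i))) := by
    filter_upwards [hs, hstat, hρ.eventually_isProbabilityMeasure, hρ.eventually_memLp hν] with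
      i hsi hi _ hρi
    refine (hi.ofReal_integral_dual_sq_noise_le hsi hρi ((hh i).comp_memLp (hh0 i) hρi) hw hw0
      ℓ).trans ?_
    gcongr
    exact_mod_cast eLpNorm_le_of_lipschitzWith_of_map_zero (ℓ.lipschitz.comp (hh i))
      (by simp [hh0 i]) 2 (ρ i)
  have hℓ0 : Tendsto (fun i => eLpNorm ℓ 2 (ρ i)) l (𝓝 0) := by
    have hℓν : eLpNorm ℓ 2 ν = 0 := by
      rw [eLpNorm_congr_ae (show ℓ =ᵐ[ν] 0 from hℓ), eLpNorm_zero]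
    exact hℓν ▸ hρ.tendsto_eLpNorm one_le_two ℓ.lipschitz (ℓ.comp_memLp' hν)
  have hbound : Tendsto (fun i => ‖ℓ‖₊ * K * eLpNorm id 2 (ρ i)) l
      (𝓝 (‖ℓ‖₊ * K * eLpNorm id 2 ν)) :=
    ENNReal.Tendsto.const_mul (hρ.tendsto_eLpNorm one_le_two LipschitzWith.id hν)
      (.inr (by finiteness))
  have hzero : Tendsto
      (fun i => 2 * (eLpNorm ℓ 2 (ρ i) * (‖ℓ‖₊ * K * eLpNorm id 2 (ρ i)))) l (𝓝 0) := by
    have hfin : ‖ℓ‖₊ * K * eLpNorm id 2 ν ≠ ∞ := by have := hν.2.ne; finiteness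
    simpa using ENNReal.Tendsto.const_mul (a := 2)
      (ENNReal.Tendsto.mul hℓ0 (.inr hfin) hbound (.inr (by simp))) (.inr (by simp))
  refine le_antisymm ?_ (integral_nonneg fun w => sq_nonneg _)
  exact ENNReal.ofReal_eq_zero.1 (le_zero_iff.1 (ge_of_tendsto hzero hle))

end Limit

section Rescaling

variable {E : Type*} [NormedAddCommGroup E] [NormedSpace ℝ E]

/-- The map `T` seen in the coordinate `y = s⁻¹ • (x - θ)` that magnifies the point `θ`. -/
def rescaledMap (T : E → E) (θ : E) (s : ℝ) (y : E) : E :=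
  s⁻¹ • (T (θ + s • y) - θ)

theorem rescaledMap_zero {T : E → E} {θ : E} (hθ : T θ = θ) (s : ℝ) : rescaledMap T θ s 0 = 0 := by
  simp [rescaledMap, hθ]

theorem lipschitzWith_rescaledMap {T : E → E} {L : ℝ≥0} (hT : LipschitzWith L T) (θ : E) (s : ℝ) :
    LipschitzWith L (rescaledMap T θ s) := by
  rcases eq_or_ne s 0 with rfl | hs
  · simp [LipschitzWith, rescaledMap]
  refine LipschitzWith.of_dist_le_mul fun x y => ?_
  have hpos : 0 < ‖s‖ := norm_pos_iff.2 hs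
  rw [rescaledMap, rescaledMap, dist_smul₀, dist_sub_right, norm_inv, inv_mul_le_iff₀ hpos]
  refine (hT.dist_le_mul _ _).trans_eq ?_
  rw [dist_add_left, dist_smul₀]
  ring

theorem lipschitzWith_of_tendsto_rescaledMap {L : ℝ≥0} {T ψ : E → E} {θ : E}
    (hT : LipschitzWith L T)
    (hlim : ∀ y, Tendsto (fun s => rescaledMap T θ s y) (𝓝[>] 0) (𝓝 (ψ y))) :
    LipschitzWith L ψ := fun x y =>
  le_of_tendsto ((hlim x).edist (hlim y))
    (.of_forall fun s => lipschitzWith_rescaledMap hT θ s x y)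

theorem le_of_tendsto_rescaledMap [FiniteDimensional ℝ E] {c : E → ℝ} (hc : IsNormLike c) {γ : ℝ}
    {T : E → E} (hT : ∀ x y, c (T x - T y) ≤ γ * c (x - y)) {θ : E}
    (hθ : T θ = θ) {y v : E} (hv : Tendsto (fun s => rescaledMap T θ s y) (𝓝[>] 0) (𝓝 v)) :
    c v ≤ γ * c y := by
  refine le_of_tendsto ((hc.continuous.tendsto v).comp hv) ?_
  filter_upwards [self_mem_nhdsWithin] with s hs
  have hs' : 0 < s := hs
  have hle := hT (θ + s • y) θ
  rw [hθ, add_sub_cancel_left, hc.smul_eq, abs_of_pos hs'] at hle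
  rw [Function.comp_apply, rescaledMap, hc.smul_eq, abs_of_pos (inv_pos.2 hs'),
    inv_mul_le_iff₀ hs']
  linarith

variable [MeasurableSpace E] [BorelSpace E] [SecondCountableTopology E]

theorem IsStationaryLaw.rescale {T : E → E} (hT : Measurable T) (θ : E) {s : ℝ} (hs : s ≠ 0)
    {νw μ : Measure E} [SFinite νw] [SFinite μ]
    (hμ : IsStationaryLaw (fun x => x + s ^ 2 • (T x - x)) (s ^ 2) νw μ) :
    IsStationaryLaw (fun y => y + s ^ 2 • (rescaledMap T θ s y - y)) s νw
      (μ.map fun x => s⁻¹ • (x - θ)) := by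
  have hφ : Measurable fun x : E => s⁻¹ • (x - θ) := by fun_prop
  have hprod : (μ.map fun x => s⁻¹ • (x - θ)).prod νw
      = (μ.prod νw).map (Prod.map (fun x => s⁻¹ • (x - θ)) id) := by
    rw [← Measure.map_prod_map _ _ hφ measurable_id, Measure.map_id]
  unfold IsStationaryLaw rescaledMap at *
  rw [hprod, Measure.map_map (by fun_prop) (hφ.prodMap measurable_id)]
  conv_rhs => rw [← hμ, Measure.map_map hφ (by fun_prop)]
  congr 1 with p
  have hx : θ + s • s⁻¹ • (p.1 - θ) = p.1 := by rw [smul_inv_smul₀ hs, add_sub_cancel]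
  have hnoise : s • p.2 = s⁻¹ • s ^ 2 • p.2 := by rw [pow_two, mul_smul, inv_smul_smul₀ hs]
  simp only [Function.comp_apply, Prod.map_fst, Prod.map_snd, id, hx, hnoise]
  module

end Rescaling

section DirectionalDerivative

variable {E G H : Type*} [NormedAddCommGroup E] [NormedSpace ℝ E] [NormedAddCommGroup G]
  [NormedSpace ℝ G] [NormedAddCommGroup H] [NormedSpace ℝ H]

theorem tendsto_rescaledMap_of_hasDerivWithinAt {T : E → E} {θ y v : E} (hθ : T θ = θ)
    (h : HasDerivWithinAt (fun t : ℝ => T (θ + t • y)) v (Set.Ioi 0) 0) :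
    Tendsto (fun s => rescaledMap T θ s y) (𝓝[>] 0) (𝓝 v) := by
  simpa [slope_fun_def, rescaledMap, hθ] using
    (hasDerivWithinAt_iff_tendsto_slope' Set.self_notMem_Ioi).1 h

theorem hasDerivWithinAt_comp_of_homogeneous {g : H → G} {u : ℝ → H} {v : H}
    (hghom : ∀ r : ℝ, 0 ≤ r → ∀ x, g (r • x) = r • g x) (hg : ContinuousAt g v) (hu0 : u 0 = 0)
    (hu : HasDerivWithinAt u v (Set.Ioi 0) 0) :
    HasDerivWithinAt (fun t => g (u t)) (g v) (Set.Ioi 0) 0 := by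
  have hg0 : g 0 = 0 := by simpa using hghom 0 le_rfl 0
  rw [hasDerivWithinAt_iff_tendsto_slope' Set.self_notMem_Ioi] at hu ⊢
  refine (hg.tendsto.comp hu).congr' ?_
  filter_upwards [self_mem_nhdsWithin] with t ht
  simp [slope_fun_def, hu0, hg0, hghom _ (inv_nonneg.2 (Set.mem_Ioi.1 ht).le)]

theorem hasDerivWithinAt_of_eventuallyEq_homogeneous_comp {T : E → G} {θ : E} {b : G} {g : H → G}
    {F : E → H} (hghom : ∀ r : ℝ, 0 ≤ r → ∀ x, g (r • x) = r • g x) (hg : Continuous g)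
    (hF0 : F 0 = 0) (hF : DifferentiableAt ℝ F 0)
    (hT : ∀ᶠ x in 𝓝 θ, T x = b + g (F (x - θ))) (y : E) :
    HasDerivWithinAt (fun t : ℝ => T (θ + t • y)) (g (fderiv ℝ F 0 y)) (Set.Ioi 0) 0 := by
  have hFline : HasDerivAt (fun t : ℝ => F (t • y)) (fderiv ℝ F 0 y) 0 := by
    simpa [HasLineDerivAt] using hF.hasFDerivAt.hasLineDerivAt y
  have hcomp := (hasDerivWithinAt_comp_of_homogeneous hghom hg.continuousAt (by simp [hF0])
    hFline.hasDerivWithinAt).const_add b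
  have hcont : Tendsto (fun t : ℝ => θ + t • y) (𝓝 0) (𝓝 θ) := by
    simpa using (show Continuous fun t : ℝ => θ + t • y by fun_prop).tendsto 0
  have heq : ∀ᶠ t : ℝ in 𝓝 0, T (θ + t • y) = b + g (F (t • y)) := by
    simpa using hcont.eventually hT
  exact hcomp.congr_of_eventuallyEq (heq.filter_mono nhdsWithin_le_nhds) heq.self_of_nhds

theorem eq_fderiv_of_homogeneous {g : H → G} (hghom : ∀ r : ℝ, 0 ≤ r → ∀ x, g (r • x) = r • g x)
    (hg : DifferentiableAt ℝ g 0) (x : H) : g x = fderiv ℝ g 0 x := by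
  have hg0 : g 0 = 0 := by simpa using hghom 0 le_rfl 0
  refine tendsto_nhds_unique (tendsto_const_nhds.congr' ?_)
    (hg.hasFDerivAt.hasLineDerivAt x).tendsto_slope_zero_right
  filter_upwards [self_mem_nhdsWithin] with t ht
  have ht' : 0 < t := ht
  simp [hg0, hghom t ht'.le, ht'.ne']

theorem exists_eq_fderiv_comp_of_homogeneous {g : H → G} {A : E →L[ℝ] H}
    (hghom : ∀ r : ℝ, 0 ≤ r → ∀ x, g (r • x) = r • g x)
    (h : DifferentiableAt ℝ g 0 ∨ A = 0) : ∃ B : E →L[ℝ] G, ∀ y, g (A y) = B y := by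
  rcases h with hg | rfl
  · exact ⟨(fderiv ℝ g 0).comp A, fun y => eq_fderiv_of_homogeneous hghom hg (A y)⟩
  · exact ⟨0, fun y => by simpa using hghom 0 le_rfl 0⟩

end DirectionalDerivative

section MeanOfLimit

theorem integral_eq_zero_of_contraction {E : Type*} [NormedAddCommGroup E] [NormedSpace ℝ E]
    [CompleteSpace E] [MeasurableSpace E] {ν : Measure E} {c : E → ℝ} (hc : IsNormLike c) {γ : ℝ}
    (hγ : γ < 1) {A : E →L[ℝ] E} (hA : ∀ y, c (A y) ≤ γ * c y) (hν : Integrable (fun y => y) ν)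
    (hmean : ∫ y, A y ∂ν = ∫ y, y ∂ν) : ∫ y, y ∂ν = 0 := by
  by_contra hne
  have hfix : A (∫ y, y ∂ν) = ∫ y, y ∂ν := (A.integral_comp_comm hν).symm.trans hmean
  have hle := hA (∫ y, y ∂ν)
  rw [hfix] at hle
  nlinarith [hc.pos _ hne]

theorem ae_dual_eq_of_le_of_integral_eq_zero {E : Type*} [NormedAddCommGroup E] [NormedSpace ℝ E]
    [CompleteSpace E] [MeasurableSpace E] {ν : Measure E} {f : E → ℝ} {z₁ z₂ : StrongDual ℝ E}
    (h₁ : ∀ y, z₁ y ≤ f y) (h₂ : ∀ y, z₂ y ≤ f y) (hν : Integrable (fun y => y) ν)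
    (hmean : ∫ y, y ∂ν = 0) (hf : Integrable f ν) (hf0 : ∫ y, f y ∂ν = 0) :
    ∀ᵐ y ∂ν, z₁ y = z₂ y := by
  have key {z : StrongDual ℝ E} (hz : ∀ y, z y ≤ f y) : (fun y => z y) =ᵐ[ν] f := by
    refine (integral_eq_iff_of_ae_le (z.integrable_comp hν) hf (ae_of_all _ hz)).1 ?_
    rw [z.integral_comp_comm hν, hmean, map_zero, hf0]
  exact (key h₁).trans (key h₂).symm

variable {E : Type*} [NormedAddCommGroup E] [NormedSpace ℝ E] [FiniteDimensional ℝ E]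
  [MeasurableSpace E] [BorelSpace E] {c : E → ℝ} {γ : ℝ} {T ψ : E → E} {θ : E}
  {μ : ℝ → Measure E} {ν νw : Measure E}

theorem tendsto_sq_nhdsGT_zero : Tendsto (fun s : ℝ => s ^ 2) (𝓝[>] 0) (𝓝[>] 0) := by
  refine tendsto_nhdsWithin_iff.2 ⟨?_, ?_⟩
  · exact (continuous_pow 2).tendsto' 0 0 (by simp) |>.mono_left nhdsWithin_le_nhds
  · filter_upwards [self_mem_nhdsWithin] with s hs using pow_pos (Set.mem_Ioi.1 hs) 2

theorem IsNormLike.tendstoWasserstein_rescale [IsProbabilityMeasure ν] (hc : IsNormLike c) (θ : E)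
    (hμ : ∀ᶠ α in 𝓝[>] 0, IsProbabilityMeasure (μ α) ∧ MemLp id 2 (μ α)) (hν : MemLp id 2 ν)
    (hlim : Tendsto (fun α : ℝ => W2dist c ((μ α).map fun x => (√α)⁻¹ • (x - θ)) ν)
      (𝓝[>] 0) (𝓝 0)) :
    TendstoWasserstein 2 (fun s : ℝ => (μ (s ^ 2)).map fun x => s⁻¹ • (x - θ)) (𝓝[>] 0) ν := by
  refine hc.tendstoWasserstein ?_ hν ((hlim.comp tendsto_sq_nhdsGT_zero).congr' ?_)
  · filter_upwards [tendsto_sq_nhdsGT_zero.eventually hμ] with s ⟨_, hμs⟩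
    have hφ : Measurable fun x : E => s⁻¹ • (x - θ) := by fun_prop
    refine ⟨Measure.isProbabilityMeasure_map hφ.aemeasurable, ?_⟩
    exact (memLp_map_measure_iff measurable_id.aestronglyMeasurable hφ.aemeasurable).2
      ((hμs.sub (memLp_const θ)).const_smul s⁻¹)
  · filter_upwards [self_mem_nhdsWithin] with s hs
    simp only [Function.comp_apply, Real.sqrt_sq (Set.mem_Ioi.1 hs).le]

theorem eventually_isStationaryLaw_rescale [SFinite νw] (hT : Measurable T) (θ : E)
    (hμ : ∀ᶠ α in 𝓝[>] 0, IsProbabilityMeasure (μ α) ∧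
      IsStationaryLaw (fun x => x + α • (T x - x)) α νw (μ α)) :
    ∀ᶠ s : ℝ in 𝓝[>] 0, IsStationaryLaw (fun y => y + s ^ 2 • (rescaledMap T θ s y - y)) s νw
      ((μ (s ^ 2)).map fun x => s⁻¹ • (x - θ)) := by
  filter_upwards [tendsto_sq_nhdsGT_zero.eventually hμ, self_mem_nhdsWithin] with s ⟨_, h⟩ hs
  exact h.rescale hT θ (ne_of_gt hs)

theorem stmt_7_general (hγ : γ < 1) (hc : IsNormLike c)
    (hT : ∀ x y, c (T x - T y) ≤ γ * c (x - y)) (hθ : T θ = θ)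
    (hψ : ∀ y, HasDerivWithinAt (fun t : ℝ => T (θ + t • y)) (ψ y) (Set.Ioi 0) 0)
    [IsProbabilityMeasure νw] (hw : MemLp id 2 νw) (hw0 : ∫ w, w ∂νw = 0)
    (hμ : ∀ᶠ α in 𝓝[>] 0, IsProbabilityMeasure (μ α) ∧ MemLp id 2 (μ α) ∧
      IsStationaryLaw (fun x => x + α • (T x - x)) α νw (μ α))
    [IsProbabilityMeasure ν] (hν : MemLp id 2 ν)
    (hlim : Tendsto (fun α : ℝ => W2dist c ((μ α).map fun x => (√α)⁻¹ • (x - θ)) ν)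
      (𝓝[>] 0) (𝓝 0)) :
    ((∃ A : E →L[ℝ] E, ∀ y, ψ y = A y) → ∫ y, y ∂ν = 0) ∧
    (∀ ℓ z₁ z₂ : StrongDual ℝ E, (∀ x, z₁ x ≤ ℓ (ψ x)) → (∀ x, z₂ x ≤ ℓ (ψ x)) →
      0 < ∫ w, (z₁ - z₂) w ^ 2 ∂νw → ∫ y, y ∂ν ≠ 0) := by
  obtain ⟨L, hL⟩ := hc.exists_lipschitzWith hc hT
  have hψlim y := tendsto_rescaledMap_of_hasDerivWithinAt hθ (hψ y)
  have hρ := hc.tendstoWasserstein_rescale θ (hμ.mono fun _ h => ⟨h.1, h.2.1⟩) hν hlim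
  have hpos : ∀ᶠ s : ℝ in 𝓝[>] 0, s ≠ 0 := eventually_mem_nhdsWithin.mono fun s hs => ne_of_gt hs
  have hstat := eventually_isStationaryLaw_rescale hL.continuous.measurable θ
    (hμ.mono fun _ h => ⟨h.1, h.2.2⟩)
  have hdrift s : LipschitzWith (L + 1) fun y => rescaledMap T θ s y - y :=
    (lipschitzWith_rescaledMap hL θ s).sub LipschitzWith.id
  have hdrift0 s : rescaledMap T θ s 0 - 0 = 0 := by simp [rescaledMap_zero hθ]
  have hνint : Integrable (fun y => y) ν := hν.integrable one_le_two
  have hψ0 : ψ 0 = 0 := tendsto_nhds_unique (hψlim 0) (by simp [rescaledMap_zero hθ])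
  have hψint : Integrable ψ ν :=
    ((lipschitzWith_of_tendsto_rescaledMap hL hψlim).comp_memLp hψ0 hν).integrable one_le_two
  have hmean : ∫ y, ψ y ∂ν = ∫ y, y ∂ν := by
    have hzero := integral_tendsto_drift_eq_zero (hρ.mono one_le_two) hνint hpos hstat hdrift
      hdrift0 (fun y => (hψlim y).sub_const y) (hw.integrable one_le_two) hw0
    rwa [integral_sub hψint hνint, sub_eq_zero] at hzero
  constructor
  · rintro ⟨A, hA⟩
    refine integral_eq_zero_of_contraction hc hγ (A := A) (fun y => ?_) hνint ?_
    · exact hA y ▸ le_of_tendsto_rescaledMap hc hT hθ (hψlim y)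
    · simpa only [hA] using hmean
  · intro ℓ z₁ z₂ h₁ h₂ hnoise hν0
    have hℓ0 : ∫ y, ℓ (ψ y) ∂ν = 0 := by
      rw [ℓ.integral_comp_comm hψint, hmean, hν0, map_zero]
    have hae := ae_dual_eq_of_le_of_integral_eq_zero h₁ h₂ hνint hν0 (ℓ.integrable_comp hψint) hℓ0
    refine hnoise.ne' (integral_dual_sq_noise_eq_zero hρ hν hpos hstat hdrift hdrift0 hw hw0 ?_)
    filter_upwards [hae] with y hy
    simp [hy]

end MeanOfLimit

section StatementForm

theorem memLp_of_integrable_norm_pow {X E : Type*} [MeasurableSpace X] [NormedAddCommGroup E]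
    {σ : Measure X} [IsFiniteMeasure σ] {f : X → E} (hf : AEStronglyMeasurable f σ) {n : ℕ}
    (hn : n ≠ 0) {p : ℝ≥0∞} (hpn : p ≤ n) (h : Integrable (fun x => ‖f x‖ ^ n) σ) :
    MemLp f p σ := by
  refine MemLp.mono_exponent ?_ hpn
  rw [← integrable_norm_rpow_iff hf (by exact_mod_cast hn) (ENNReal.natCast_ne_top n)]
  simpa using h

theorem exists_dual_le_of_inner_le {ι E : Type*} [NormedAddCommGroup E]
    [InnerProductSpace ℝ E] {ψ : E → EuclideanSpace ℝ ι} {i : ι} {z₁ z₂ : E}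
    (h : (∀ x, inner ℝ z₁ x ≤ ψ x i) ∧ (∀ x, inner ℝ z₂ x ≤ ψ x i) ∨
      (∀ x, ψ x i ≤ inner ℝ z₁ x) ∧ (∀ x, ψ x i ≤ inner ℝ z₂ x)) :
    ∃ (ℓ : StrongDual ℝ (EuclideanSpace ℝ ι)) (ℓ₁ ℓ₂ : StrongDual ℝ E),
      (∀ x, ℓ₁ x ≤ ℓ (ψ x)) ∧ (∀ x, ℓ₂ x ≤ ℓ (ψ x)) ∧
      ∀ x, (ℓ₁ - ℓ₂) x ^ 2 = inner ℝ (z₁ - z₂) x ^ 2 := by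
  rcases h with ⟨h₁, h₂⟩ | ⟨h₁, h₂⟩
  · refine ⟨EuclideanSpace.proj i, innerSL ℝ z₁, innerSL ℝ z₂, ?_, ?_, ?_⟩
    · simpa using h₁
    · simpa using h₂
    · simp [inner_sub_left]
  · refine ⟨-EuclideanSpace.proj i, -innerSL ℝ z₁, -innerSL ℝ z₂, ?_, ?_, fun x => ?_⟩
    · simpa using h₁
    · simpa using h₂
    · simp [inner_sub_left]
      ring

end StatementForm

theorem stmt_7 {d m : ℕ} (γ : ℝ) (hγ : γ ∈ Set.Ioo (0:ℝ) 1)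
    (c : EuclideanSpace ℝ (Fin d) → ℝ) (hc : IsNormLike c)
    (T : EuclideanSpace ℝ (Fin d) → EuclideanSpace ℝ (Fin d))
    (hT : ∀ θ θ', c (T θ - T θ') ≤ γ * c (θ - θ'))
    (θstar : EuclideanSpace ℝ (Fin d)) (hfix : T θstar = θstar)
    -- g∘F decomposability of T at θstar
    (g : EuclideanSpace ℝ (Fin m) → EuclideanSpace ℝ (Fin d))
    (F : EuclideanSpace ℝ (Fin d) → EuclideanSpace ℝ (Fin m))
    (ε : ℝ) (hε : 0 < ε)
    (hgcont : Continuous g)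
    (hghom : ∀ r : ℝ, 0 ≤ r → ∀ x, g (r • x) = r • g x)
    (hF0 : F 0 = 0)
    (hFdiff : ∀ x ∈ Metric.ball (0 : EuclideanSpace ℝ (Fin d)) ε, DifferentiableAt ℝ F x)
    (hFderiv : ContinuousAt (fderiv ℝ F) 0)
    (hdecomp : ∀ θ ∈ Metric.ball θstar ε, T θ = θstar + g (F (θ - θstar)))
    -- i.i.d. zero-mean noise with finite fourth moment, given by its law νw
    (νw : Measure (EuclideanSpace ℝ (Fin d))) [IsProbabilityMeasure νw]
    (hνint : Integrable (fun x : EuclideanSpace ℝ (Fin d) => x) νw)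
    (hνmean : ∫ x, x ∂νw = 0)
    (hν4 : Integrable (fun x : EuclideanSpace ℝ (Fin d) => ‖x‖ ^ 4) νw)
    -- the stationary distributions μ α for small α
    (α₁ : ℝ) (hα₁ : 0 < α₁) (μ : ℝ → Measure (EuclideanSpace ℝ (Fin d)))
    (hμ : ∀ α ∈ Set.Ioc (0:ℝ) α₁, IsProbabilityMeasure (μ α) ∧
      Integrable (fun x : EuclideanSpace ℝ (Fin d) => ‖x‖ ^ 2) (μ α) ∧
      saStep T α νw (μ α) = μ α)
    -- the steady-state limit ν
    (ν : Measure (EuclideanSpace ℝ (Fin d))) (hνprob : IsProbabilityMeasure ν)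
    (hν2 : Integrable (fun x : EuclideanSpace ℝ (Fin d) => ‖x‖ ^ 2) ν)
    (hνlim : Tendsto (fun α : ℝ =>
        W2dist c (Measure.map (fun x => (Real.sqrt α)⁻¹ • (x - θstar)) (μ α)) ν)
      (𝓝[>] 0) (𝓝 0)) :
    -- (1) smooth case: the limit has zero mean
    (((∃ δ > 0, (∀ x ∈ Metric.ball (0 : EuclideanSpace ℝ (Fin m)) δ,
          DifferentiableAt ℝ g x) ∧ ContinuousAt (fderiv ℝ g) 0) ∨
        fderiv ℝ F 0 = 0) →
      (∫ y, y ∂ν) = 0) ∧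
    -- (2) genuinely nonsmooth case: the limit has nonzero mean
    ((∀ z : EuclideanSpace ℝ (Fin d), z ≠ 0 → 0 < ∫ x, (@inner ℝ _ _ z x) ^ 2 ∂νw) →
      (∃ i : Fin d, ∃ z₁ z₂ : EuclideanSpace ℝ (Fin d), z₁ ≠ z₂ ∧
        (((∀ x, @inner ℝ _ _ z₁ x ≤ g (fderiv ℝ F 0 x) i) ∧
          (∀ x, @inner ℝ _ _ z₂ x ≤ g (fderiv ℝ F 0 x) i)) ∨
         ((∀ x, g (fderiv ℝ F 0 x) i ≤ @inner ℝ _ _ z₁ x) ∧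
          (∀ x, g (fderiv ℝ F 0 x) i ≤ @inner ℝ _ _ z₂ x)))) →
      (∫ y, y ∂ν) ≠ 0) := by
  have hid {σ : Measure (EuclideanSpace ℝ (Fin d))} : AEStronglyMeasurable id σ :=
    measurable_id.aestronglyMeasurable
  have hF : DifferentiableAt ℝ F 0 := hFdiff 0 (Metric.mem_ball_self hε)
  have hψ := hasDerivWithinAt_of_eventuallyEq_homogeneous_comp hghom hgcont hF0 hF
    (eventually_of_mem (Metric.ball_mem_nhds θstar hε) hdecomp)
  have hstat : ∀ᶠ α in 𝓝[>] 0, IsProbabilityMeasure (μ α) ∧ MemLp id 2 (μ α) ∧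
      IsStationaryLaw (fun x => x + α • (T x - x)) α νw (μ α) := by
    filter_upwards [Ioc_mem_nhdsGT hα₁] with α hα
    obtain ⟨hprob, hμ2, hfixed⟩ := hμ α hα
    refine ⟨hprob, memLp_of_integrable_norm_pow hid two_ne_zero le_rfl hμ2, ?_⟩
    simpa [IsStationaryLaw, saStep, smul_add, add_assoc] using hfixed
  obtain ⟨hsmooth, hnonsmooth⟩ := stmt_7_general hγ.2 hc hT hfix hψ
    (memLp_of_integrable_norm_pow hid four_ne_zero (by norm_num) hν4) hνmean hstat
    (memLp_of_integrable_norm_pow hid two_ne_zero le_rfl hν2) hνlim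
  refine ⟨fun h => hsmooth (exists_eq_fderiv_comp_of_homogeneous hghom (h.imp_left ?_)), ?_⟩
  · exact fun ⟨_, hδ, hg, _⟩ => hg 0 (Metric.mem_ball_self hδ)
  · rintro hcov ⟨i, z₁, z₂, hne, hz⟩
    obtain ⟨ℓ, ℓ₁, ℓ₂, h₁, h₂, hsq⟩ := exists_dual_le_of_inner_le hz
    exact hnonsmooth ℓ ℓ₁ ℓ₂ h₁ h₂ (by simpa only [hsq] using hcov _ (sub_ne_zero.2 hne))
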